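/- Let G be a group with finite generating set and word metric, admitting a homological connecting vector (k₀,…,k_m) of length m, and set k := max(k₀,…,k_m). Let (φ_q)_{q=0,…,m} be a chain endomorphism of ℤG-complexes on (C_q^k(G))_{q=0,…,m} extending the identity on ℤ. Define U(φ) to be the set of characters χ : G → ℝ such that v_χ(φ_q(x)) − v_χ(x) > 0 for every simplex x = (1,g₁,…,g_q) ∈ Δ^q_k(G) and every q = 0,…,m. Then U(φ) is an open subset of Hom(G,ℝ) in the topology of pointwise convergence, and U(φ) ⊆ Σ^m(G;ℤ). -/

import Mathlib

open Finsupp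

variable {G : Type*} [Group G]

/-- Word length with respect to a generating set `X`. -/
noncomputable def wordLength (X : Finset G) (g : G) : ℕ :=
  sInf {n : ℕ | ∃ w : List G, w.length = n ∧ (∀ x ∈ w, x ∈ X ∨ x⁻¹ ∈ X) ∧ w.prod = g}

/-- The left-invariant word metric `d(g,h) = l(g⁻¹h)`. -/
noncomputable def wordDist (X : Finset G) (g h : G) : ℕ :=
  wordLength X (g⁻¹ * h)

/-- `c` is a chain in `C_q^k(S)`: its support consists of `(q+1)`-tuples of elements of `S`
that are pairwise at distance at most `k`. -/
def VRChain (X : Finset G) (S : Set G) (q k : ℕ) (c : (Fin (q + 1) → G) →₀ ℤ) : Prop :=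
  ∀ σ ∈ c.support, (∀ i, σ i ∈ S) ∧ ∀ i j, wordDist X (σ i) (σ j) ≤ k

/-- The simplicial boundary map `∂_{q+1} : ℤ[G^{q+2}] → ℤ[G^{q+1}]`. -/
noncomputable def bnd (q : ℕ) :
    ((Fin (q + 2) → G) →₀ ℤ) →ₗ[ℤ] ((Fin (q + 1) → G) →₀ ℤ) :=
  Finsupp.lift _ ℤ _
    (fun σ => ∑ i : Fin (q + 2), ((-1 : ℤ) ^ (i : ℕ)) • Finsupp.single (σ ∘ i.succAbove) (1 : ℤ))

/-- The augmentation `ε : ℤ[G] → ℤ` sending every vertex to `1`. -/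
noncomputable def aug : ((Fin 1 → G) →₀ ℤ) →ₗ[ℤ] ℤ :=
  Finsupp.lift ℤ ℤ (Fin 1 → G) (fun _ => (1 : ℤ))

/-- Reduced `q`-cycles at scale `k` on `S` bound at scale `l` on `S`. -/
def BoundsAt (X : Finset G) (S : Set G) : ℕ → ℕ → ℕ → Prop
  | 0, k, l => ∀ z : (Fin 1 → G) →₀ ℤ, VRChain X S 0 k z → aug z = 0 →
      ∃ c : (Fin 2 → G) →₀ ℤ, VRChain X S 1 l c ∧ bnd 0 c = z
  | (q + 1), k, l => ∀ z : (Fin (q + 2) → G) →₀ ℤ, VRChain X S (q + 1) k z → bnd q z = 0 →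
      ∃ c : (Fin (q + 3) → G) →₀ ℤ, VRChain X S (q + 2) l c ∧ bnd (q + 1) c = z

/-- `S ⊆ G` is of type `FP_m`. -/
def TypeFP (X : Finset G) (S : Set G) (m : ℕ) : Prop :=
  ∀ q < m, ∀ k : ℕ, ∃ l ≥ k, BoundsAt X S q k l

/-- A character on `G` is a homomorphism to the additive reals. -/
def IsCharacter (χ : G → ℝ) : Prop :=
  ∀ g h : G, χ (g * h) = χ g + χ h

/-- Simultaneous left translation on chains, making `ℤ[G^{q+1}]` a `ℤG`-module. -/
noncomputable def lTranslate (g : G) (q : ℕ) :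
    ((Fin (q + 1) → G) →₀ ℤ) →ₗ[ℤ] ((Fin (q + 1) → G) →₀ ℤ) :=
  Finsupp.lmapDomain ℤ ℤ (fun σ i => g * σ i)

/-- A chain endomorphism of `ℤG`-complexes on `(C_q^k(G))_{q=0,…,m}` extending the identity
on `ℤ`: each `φ q` maps scale-`k` chains to scale-`k` chains, is `G`-equivariant,
satisfies `ε ∘ φ₀ = ε` and commutes with the boundary maps. -/
def IsChainEndo (X : Finset G) (k m : ℕ)
    (φ : ∀ q : ℕ, ((Fin (q + 1) → G) →₀ ℤ) →ₗ[ℤ] ((Fin (q + 1) → G) →₀ ℤ)) : Prop :=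
  (∀ q ≤ m, ∀ c, VRChain X Set.univ q k c → VRChain X Set.univ q k (φ q c)) ∧
  (∀ q ≤ m, ∀ (g : G) (c), VRChain X Set.univ q k c →
    φ q (lTranslate g q c) = lTranslate g q (φ q c)) ∧
  (∀ c : (Fin 1 → G) →₀ ℤ, VRChain X Set.univ 0 k c → aug (φ 0 c) = aug c) ∧
  (∀ q : ℕ, q + 1 ≤ m → ∀ c : (Fin (q + 2) → G) →₀ ℤ, VRChain X Set.univ (q + 1) k c →
    bnd q (φ (q + 1) c) = φ q (bnd q c))

/-- The valuation of a simplex: `v(σ) = min_i χ(g_i)` (with values in `EReal`). -/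
noncomputable def vsimp (χ : G → ℝ) {q : ℕ} (σ : Fin (q + 1) → G) : EReal :=
  ⨅ i, (χ (σ i) : EReal)

/-- The valuation of a chain: the minimum of the valuations of the simplices in its support
(`⊤` for the zero chain). -/
noncomputable def vchain (χ : G → ℝ) {q : ℕ} (c : (Fin (q + 1) → G) →₀ ℤ) : EReal :=
  ⨅ σ ∈ c.support, vsimp χ σ

/-- The set of characters for which `φ` raises the valuation on all basis simplices
`(1,g₁,…,g_q) ∈ Δ^q_k`. -/
def UCond {G : Type*} [Group G] (X : Finset G) (k m : ℕ)
    (φ : ∀ q : ℕ, ((Fin (q + 1) → G) →₀ ℤ) →ₗ[ℤ] ((Fin (q + 1) → G) →₀ ℤ))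
    (χ : G → ℝ) : Prop :=
  ∀ q ≤ m, ∀ x : Fin (q + 1) → G, x 0 = 1 →
    VRChain X Set.univ q k (Finsupp.single x 1) →
      0 < vchain χ (φ q (Finsupp.single x 1)) - vchain χ (Finsupp.single x 1)

/-- The `n`-tuples of elements of `S` that are pairwise at distance at most `k`. -/
def vrTuples (X : Finset G) (S : Set G) (n k : ℕ) : Set (Fin n → G) :=
  {σ | (∀ i, σ i ∈ S) ∧ ∀ i j, wordDist X (σ i) (σ j) ≤ k}

/-- The chains spanned by `vrTuples X S n k`. -/
def vrChains (X : Finset G) (S : Set G) (n k : ℕ) : Submodule ℤ ((Fin n → G) →₀ ℤ) :=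
  Finsupp.supported ℤ ℤ (vrTuples X S n k)

/-- The boundary of the augmented complex of tuples, indexed by the number of vertices. -/
noncomputable def tupleBnd (n : ℕ) : ((Fin (n + 1) → G) →₀ ℤ) →ₗ[ℤ] ((Fin n → G) →₀ ℤ) :=
  ∑ i : Fin (n + 1), ((-1 : ℤ) ^ (i : ℕ)) •
    Finsupp.lmapDomain ℤ ℤ (fun σ : Fin (n + 1) → G => σ ∘ i.succAbove)

/-- The cone operator with apex `a`. -/
noncomputable def cone (a : G) (n : ℕ) : ((Fin n → G) →₀ ℤ) →ₗ[ℤ] ((Fin (n + 1) → G) →₀ ℤ) :=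
  Finsupp.lmapDomain ℤ ℤ (fun σ => Fin.cons a σ)

/-- Left translation on chains of tuples. -/
noncomputable def leftTr (g : G) (n : ℕ) : ((Fin n → G) →₀ ℤ) →ₗ[ℤ] ((Fin n → G) →₀ ℤ) :=
  Finsupp.lmapDomain ℤ ℤ (fun σ i => g * σ i)

/-- Right translation on chains of tuples. -/
noncomputable def rightTr (t : G) (n : ℕ) : ((Fin n → G) →₀ ℤ) →ₗ[ℤ] ((Fin n → G) →₀ ℤ) :=
  Finsupp.lmapDomain ℤ ℤ (fun σ i => σ i * t)

/-! ### Linear maps and supported chains -/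

theorem map_mem_supported {α β : Type*} {A : Set α} {N : Submodule ℤ (β →₀ ℤ)}
    (f : (α →₀ ℤ) →ₗ[ℤ] (β →₀ ℤ)) (h : ∀ σ ∈ A, f (single σ 1) ∈ N)
    {c : α →₀ ℤ} (hc : c ∈ Finsupp.supported ℤ ℤ A) : f c ∈ N := by
  rw [Finsupp.supported_eq_span_single] at hc
  have : Submodule.span ℤ ((fun i => single i (1 : ℤ)) '' A) ≤ N.comap f := by
    rw [Submodule.span_le]
    rintro _ ⟨σ, hσ, rfl⟩
    exact h σ hσ
  exact this hc

theorem eqOn_supported {α : Type*} {M : Type*} [AddCommGroup M] {A : Set α}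
    (f g : (α →₀ ℤ) →ₗ[ℤ] M) (h : ∀ σ ∈ A, f (single σ 1) = g (single σ 1))
    {c : α →₀ ℤ} (hc : c ∈ Finsupp.supported ℤ ℤ A) : f c = g c := by
  rw [Finsupp.supported_eq_span_single] at hc
  have := LinearMap.eqOn_span (f := f) (g := g)
    (s := (fun i => single i (1 : ℤ)) '' A) (by rintro _ ⟨σ, hσ, rfl⟩; exact h σ hσ)
  exact this hc

theorem single_mem_supported_iff {α : Type*} {A : Set α} {σ : α} :
    single σ (1 : ℤ) ∈ Finsupp.supported ℤ ℤ A ↔ σ ∈ A := by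
  rw [Finsupp.mem_supported, Finsupp.support_single _ one_ne_zero]
  simp

/-! ### The augmented complex -/

theorem tupleBnd_single {V : Type*} (n : ℕ) (σ : Fin (n + 1) → V) :
    tupleBnd n (single σ 1) =
      ∑ i : Fin (n + 1), ((-1 : ℤ) ^ (i : ℕ)) • single (σ ∘ i.succAbove) (1 : ℤ) := by
  simp [tupleBnd, LinearMap.sum_apply, Finsupp.mapDomain_single]

theorem bnd_eq_tupleBnd {V : Type*} (q : ℕ) : (bnd q : ((Fin (q + 2) → V) →₀ ℤ) →ₗ[ℤ] _) =
    tupleBnd (q + 1) := by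
  ext1 σ
  ext1
  simp [bnd, tupleBnd_single]

theorem tupleBnd_zero_eq {V : Type*} (c : (Fin 1 → V) →₀ ℤ) :
    tupleBnd 0 c = single (Fin.elim0 : Fin 0 → V) (aug c) := by
  have : (tupleBnd 0 : ((Fin 1 → V) →₀ ℤ) →ₗ[ℤ] _) =
      (Finsupp.lsingle (Fin.elim0 : Fin 0 → V)).comp aug := by
    ext1 σ
    ext1
    simp only [LinearMap.comp_apply, Finsupp.lsingle_apply, tupleBnd_single, aug]
    simp
  rw [this]
  rfl

theorem tupleBnd_zero_eq_zero_iff {V : Type*} (c : (Fin 1 → V) →₀ ℤ) : tupleBnd 0 c = 0 ↔ aug c = 0 := by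
  rw [tupleBnd_zero_eq, Finsupp.single_eq_zero]

theorem leftTr_single (g : G) (n : ℕ) (σ : Fin n → G) :
    leftTr g n (single σ 1) = single (fun i => g * σ i) 1 := by
  simp [leftTr, Finsupp.mapDomain_single]

theorem rightTr_single (g : G) (n : ℕ) (σ : Fin n → G) :
    rightTr g n (single σ 1) = single (fun i => σ i * g) 1 := by
  simp [rightTr, Finsupp.mapDomain_single]

theorem cone_single {V : Type*} (a : V) (n : ℕ) (σ : Fin n → V) :
    cone a n (single σ 1) = single (Fin.cons a σ) 1 := by
  simp [cone, Finsupp.mapDomain_single]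

theorem tupleBnd_leftTr (g : G) (n : ℕ) (c : (Fin (n + 1) → G) →₀ ℤ) :
    tupleBnd n (leftTr g (n + 1) c) = leftTr g n (tupleBnd n c) := by
  suffices h : (tupleBnd n).comp (leftTr g (n + 1)) = (leftTr g n).comp (tupleBnd n) from
    LinearMap.congr_fun h c
  ext1 σ
  ext1
  simp only [LinearMap.comp_apply, Finsupp.lsingle_apply, leftTr_single, tupleBnd_single,
    map_sum, map_smul]
  rfl

theorem tupleBnd_rightTr (g : G) (n : ℕ) (c : (Fin (n + 1) → G) →₀ ℤ) :
    tupleBnd n (rightTr g (n + 1) c) = rightTr g n (tupleBnd n c) := by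
  suffices h : (tupleBnd n).comp (rightTr g (n + 1)) = (rightTr g n).comp (tupleBnd n) from
    LinearMap.congr_fun h c
  ext1 σ
  ext1
  simp only [LinearMap.comp_apply, Finsupp.lsingle_apply, rightTr_single, tupleBnd_single,
    map_sum, map_smul]
  rfl

theorem leftTr_rightTr (g t : G) (n : ℕ) (c : (Fin n → G) →₀ ℤ) :
    rightTr t n (leftTr g n c) = leftTr g n (rightTr t n c) := by
  suffices h : (rightTr t n).comp (leftTr g n) = (leftTr g n).comp (rightTr t n) from
    LinearMap.congr_fun h c
  ext1 σ
  ext1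
  simp only [LinearMap.comp_apply, Finsupp.lsingle_apply, leftTr_single, rightTr_single, mul_assoc]

theorem cone_leftTr (g a : G) (n : ℕ) (c : (Fin n → G) →₀ ℤ) :
    cone (g * a) n (leftTr g n c) = leftTr g (n + 1) (cone a n c) := by
  suffices h : (cone (g * a) n).comp (leftTr g n) = (leftTr g (n + 1)).comp (cone a n) from
    LinearMap.congr_fun h c
  ext1 σ
  ext1
  simp only [LinearMap.comp_apply, Finsupp.lsingle_apply, leftTr_single, cone_single]
  congr 1
  funext i
  refine Fin.cases ?_ (fun j => ?_) i <;> simp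

theorem tupleBnd_cone_zero {V : Type*} (a : V) (c : (Fin 0 → V) →₀ ℤ) : tupleBnd 0 (cone a 0 c) = c := by
  suffices h : (tupleBnd 0).comp (cone a 0) = LinearMap.id from LinearMap.congr_fun h c
  ext1 σ
  ext1
  simp only [LinearMap.comp_apply, Finsupp.lsingle_apply, cone_single, tupleBnd_single]
  simp

theorem tupleBnd_cone_succ {V : Type*} (a : V) (n : ℕ) (c : (Fin (n + 1) → V) →₀ ℤ) :
    tupleBnd (n + 1) (cone a (n + 1) c) = c - cone a n (tupleBnd n c) := by
  suffices h : (tupleBnd (n + 1)).comp (cone a (n + 1)) =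
      LinearMap.id - (cone a n).comp (tupleBnd n) from LinearMap.congr_fun h c
  ext1 σ
  ext1
  simp only [LinearMap.comp_apply, Finsupp.lsingle_apply, LinearMap.sub_apply, LinearMap.id_apply,
    cone_single, tupleBnd_single, map_sum, map_smul]
  rw [Fin.sum_univ_succ, sub_eq_add_neg, ← Finset.sum_neg_distrib]
  congr 1
  · simp
  · refine Finset.sum_congr rfl fun i _ => ?_
    rw [Fin.val_succ, pow_succ, mul_neg_one, neg_smul]
    congr 3
    funext j
    refine Fin.cases ?_ (fun j => ?_) j <;> simp

theorem tupleBnd_tupleBnd {V : Type*} (n : ℕ) (c : (Fin (n + 2) → V) →₀ ℤ) :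
    tupleBnd n (tupleBnd (n + 1) c) = 0 := by
  induction n with
  | zero =>
    suffices h : (tupleBnd 0).comp (tupleBnd (0 + 1)) =
      (0 : ((Fin (0 + 2) → V) →₀ ℤ) →ₗ[ℤ] _) from LinearMap.congr_fun h c
    ext1 σ
    ext1
    simp only [LinearMap.comp_apply, Finsupp.lsingle_apply, LinearMap.zero_apply]
    rw [← Fin.cons_self_tail σ, ← cone_single, tupleBnd_cone_succ, map_sub, tupleBnd_cone_zero,
      sub_self]
  | succ n ih =>
    suffices h : (tupleBnd (n + 1)).comp (tupleBnd (n + 1 + 1)) =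
      (0 : ((Fin (n + 1 + 2) → V) →₀ ℤ) →ₗ[ℤ] _) from LinearMap.congr_fun h c
    ext1 σ
    ext1
    simp only [LinearMap.comp_apply, Finsupp.lsingle_apply, LinearMap.zero_apply]
    rw [← Fin.cons_self_tail σ, ← cone_single, tupleBnd_cone_succ, map_sub, tupleBnd_cone_succ,
      ih, map_zero, sub_zero, sub_self]

/-! ### Scales and vertex sets -/

theorem vrTuples_mono {X : Finset G} {S T : Set G} {n k l : ℕ} (h : S ⊆ T) (hk : k ≤ l) :
    vrTuples X S n k ⊆ vrTuples X T n l :=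
  fun _ hσ => ⟨fun i => h (hσ.1 i), fun i j => (hσ.2 i j).trans hk⟩

theorem vrChains_mono {X : Finset G} {S T : Set G} {n k l : ℕ} (h : S ⊆ T) (hk : k ≤ l) :
    vrChains X S n k ≤ vrChains X T n l :=
  Finsupp.supported_mono (vrTuples_mono h hk)

theorem vrChain_iff {X : Finset G} {S : Set G} {q k : ℕ} {c : (Fin (q + 1) → G) →₀ ℤ} :
    VRChain X S q k c ↔ c ∈ vrChains X S (q + 1) k := Iff.rfl

theorem tupleBnd_mem {X : Finset G} {S : Set G} {n k : ℕ} {c : (Fin (n + 1) → G) →₀ ℤ}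
    (hc : c ∈ vrChains X S (n + 1) k) : tupleBnd n c ∈ vrChains X S n k := by
  refine map_mem_supported _ (fun σ hσ => ?_) hc
  rw [tupleBnd_single]
  refine Submodule.sum_mem _ fun i _ => Submodule.smul_mem _ _ ?_
  exact single_mem_supported_iff.2 ⟨fun j => hσ.1 _, fun j j' => hσ.2 _ _⟩

theorem leftTr_mem {X : Finset G} {n k : ℕ} (g : G) {c : (Fin n → G) →₀ ℤ}
    (hc : c ∈ vrChains X Set.univ n k) : leftTr g n c ∈ vrChains X Set.univ n k := by
  refine map_mem_supported _ (fun σ hσ => ?_) hc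
  rw [leftTr_single]
  refine single_mem_supported_iff.2 ⟨fun j => Set.mem_univ _, fun j j' => ?_⟩
  have := hσ.2 j j'
  simpa [wordDist, mul_assoc] using this

theorem boundsAt_iff {X : Finset G} {S : Set G} {q k l : ℕ} :
    BoundsAt X S q k l ↔ ∀ z ∈ vrChains X S (q + 1) k, tupleBnd q z = 0 →
      ∃ c ∈ vrChains X S (q + 2) l, tupleBnd (q + 1) c = z := by
  cases q with
  | zero =>
    simp only [BoundsAt, vrChain_iff, bnd_eq_tupleBnd, ← tupleBnd_zero_eq_zero_iff]
  | succ q =>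
    simp only [BoundsAt, vrChain_iff, bnd_eq_tupleBnd]

theorem finite_wordLength_le {X : Finset G} (hX : Subgroup.closure (X : Set G) = ⊤) (k : ℕ) :
    {g : G | wordLength X g ≤ k}.Finite := by
  set Y : Set G := {x | x ∈ X ∨ x⁻¹ ∈ X}
  have hY : Y.Finite := by
    refine (X.finite_toSet.union (X.finite_toSet.image (fun x => x⁻¹))).subset ?_
    rintro x (h | h)
    · exact Or.inl h
    · exact Or.inr ⟨x⁻¹, h, inv_inv x⟩
  have : Finite Y := hY
  refine ((List.finite_length_le Y k).image (fun w => (w.map Subtype.val).prod)).subset ?_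
  intro g hg
  have hne : {n : ℕ | ∃ w : List G, w.length = n ∧ (∀ x ∈ w, x ∈ X ∨ x⁻¹ ∈ X) ∧
      w.prod = g}.Nonempty := by
    have hg' : g ∈ Subgroup.closure (X : Set G) := hX ▸ Subgroup.mem_top g
    rw [← Subgroup.mem_toSubmonoid, Subgroup.closure_toSubmonoid] at hg'
    obtain ⟨w, hw, hp⟩ := Submonoid.exists_list_of_mem_closure hg'
    exact ⟨_, w, rfl, hw, hp⟩
  obtain ⟨w, hl, hw, hp⟩ := Nat.sInf_mem hne
  lift w to List Y using hw
  refine ⟨w, ?_, hp⟩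
  simp only [Set.mem_ofPred_eq]
  rw [List.length_map] at hl
  rw [hl]
  exact hg

theorem finite_normalized {X : Finset G} (hX : Subgroup.closure (X : Set G) = ⊤) (n k : ℕ) :
    {σ : Fin (n + 1) → G | σ 0 = 1 ∧ σ ∈ vrTuples X Set.univ (n + 1) k}.Finite := by
  refine (Set.Finite.pi' (fun _ : Fin (n + 1) => finite_wordLength_le hX k)).subset ?_
  rintro σ ⟨h0, hσ⟩ i
  simpa [wordDist, h0] using hσ.2 0 i

/-! ### Equivariant operators are controlled -/

/-- `L` commutes with left translations on chains at scale `k`. -/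
def EquivariantAt (X : Finset G) (k : ℕ) {n p : ℕ}
    (L : ((Fin n → G) →₀ ℤ) →ₗ[ℤ] ((Fin p → G) →₀ ℤ)) : Prop :=
  ∀ g : G, ∀ c ∈ vrChains X Set.univ n k, L (leftTr g n c) = leftTr g p (L c)

theorem leftTr_normalize {n : ℕ} (σ : Fin (n + 1) → G) :
    single σ (1 : ℤ) = leftTr (σ 0) (n + 1) (single (fun i => (σ 0)⁻¹ * σ i) 1) := by
  rw [leftTr_single]
  simp

theorem normalize_mem {X : Finset G} {S : Set G} {n k : ℕ} {σ : Fin (n + 1) → G}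
    (hσ : σ ∈ vrTuples X S (n + 1) k) :
    (fun i => (σ 0)⁻¹ * σ i) ∈ vrTuples X Set.univ (n + 1) k := by
  refine ⟨fun _ => Set.mem_univ _, fun i j => ?_⟩
  have := hσ.2 i j
  simpa [wordDist, mul_assoc] using this

theorem exists_bound_of_equivariantAt {X : Finset G} (hX : Subgroup.closure (X : Set G) = ⊤)
    {χ : G → ℝ} (hχ : IsCharacter χ) {n p k : ℕ}
    {L : ((Fin (n + 1) → G) →₀ ℤ) →ₗ[ℤ] ((Fin p → G) →₀ ℤ)} (hL : EquivariantAt X k L) :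
    ∃ (l : ℕ) (B : ℝ), ∀ r : ℝ, ∀ c ∈ vrChains X {g | r ≤ χ g} (n + 1) k,
      L c ∈ vrChains X {g | r - B ≤ χ g} p l := by
  have hfin := finite_normalized hX n k
  have hl : ∀ᶠ l : ℕ in Filter.atTop,
      ∀ σ ∈ {σ : Fin (n + 1) → G | σ 0 = 1 ∧ σ ∈ vrTuples X Set.univ (n + 1) k},
      ∀ τ ∈ (L (single σ 1)).support, ∀ i j, wordDist X (τ i) (τ j) ≤ l := by
    rw [Filter.eventually_all_finite hfin]
    intro σ _
    rw [Filter.eventually_all_finset]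
    intro τ _
    simp only [Filter.eventually_all]
    exact fun i j => Filter.eventually_ge_atTop _
  have hB : ∀ᶠ B : ℝ in Filter.atTop,
      ∀ σ ∈ {σ : Fin (n + 1) → G | σ 0 = 1 ∧ σ ∈ vrTuples X Set.univ (n + 1) k},
      ∀ τ ∈ (L (single σ 1)).support, ∀ i, -χ (τ i) ≤ B := by
    rw [Filter.eventually_all_finite hfin]
    intro σ _
    rw [Filter.eventually_all_finset]
    intro τ _
    simp only [Filter.eventually_all]
    exact fun i => Filter.eventually_ge_atTop _
  obtain ⟨l, hl⟩ := hl.exists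
  obtain ⟨B, hB⟩ := hB.exists
  refine ⟨l, B, fun r c hc => map_mem_supported L (fun σ hσ => ?_) hc⟩
  have hσ' := normalize_mem hσ
  rw [leftTr_normalize, hL _ _ (single_mem_supported_iff.2 hσ')]
  refine map_mem_supported (leftTr (σ 0) p) (fun τ hτ => ?_)
    (Finsupp.mem_supported_support (R := ℤ) (L _))
  rw [leftTr_single]
  refine single_mem_supported_iff.2 ⟨fun i => ?_, fun i j => ?_⟩
  · have h1 := hB _ ⟨inv_mul_cancel _, hσ'⟩ τ hτ i
    have h2 : r ≤ χ (σ 0) := hσ.1 0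
    have h3 := hχ (σ 0) (τ i)
    simp only [Set.mem_ofPred_eq]
    linarith
  · have h1 := hl _ ⟨inv_mul_cancel _, hσ'⟩ τ hτ i j
    simpa [wordDist, mul_assoc] using h1

theorem exists_le_of_mem_vrChains {X : Finset G} (χ : G → ℝ) {n k : ℕ} {c : (Fin n → G) →₀ ℤ}
    (hc : c ∈ vrChains X Set.univ n k) : ∃ r : ℝ, c ∈ vrChains X {g | r ≤ χ g} n k := by
  have : ∀ᶠ r : ℝ in Filter.atBot, ∀ σ ∈ c.support, ∀ i, r ≤ χ (σ i) := by
    rw [Filter.eventually_all_finset]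
    intro σ _
    simp only [Filter.eventually_all]
    exact fun i => Filter.eventually_le_atBot _
  obtain ⟨r, hr⟩ := this.exists
  exact ⟨r, fun σ hσ => ⟨hr σ hσ, (hc hσ).2⟩⟩

/-! ### Cone homotopies -/

/-- The homotopy between `f` and the identity obtained by coning over the initial vertex. -/
noncomputable def coneHomotopy
    (f : ∀ n, ((Fin n → G) →₀ ℤ) →ₗ[ℤ] ((Fin n → G) →₀ ℤ)) :
    ∀ n, ((Fin n → G) →₀ ℤ) →ₗ[ℤ] ((Fin (n + 1) → G) →₀ ℤ)
  | 0 => 0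
  | n + 1 => Finsupp.lift _ ℤ _ fun σ => cone (σ 0) (n + 1)
      (f (n + 1) (single σ 1) - single σ 1 - coneHomotopy f n (tupleBnd n (single σ 1)))

theorem coneHomotopy_succ_single {V : Type*}
    (f : ∀ n, ((Fin n → V) →₀ ℤ) →ₗ[ℤ] ((Fin n → V) →₀ ℤ)) (n : ℕ) (σ : Fin (n + 1) → V) :
    coneHomotopy f (n + 1) (single σ 1) = cone (σ 0) (n + 1)
      (f (n + 1) (single σ 1) - single σ 1 - coneHomotopy f n (tupleBnd n (single σ 1))) := by
  simp [coneHomotopy]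

theorem tupleBnd_coneHomotopy {X : Finset G} {k m : ℕ}
    {f : ∀ n, ((Fin n → G) →₀ ℤ) →ₗ[ℤ] ((Fin n → G) →₀ ℤ)} (h0 : f 0 = LinearMap.id)
    (hf : ∀ n ≤ m, ∀ c ∈ vrChains X Set.univ (n + 1) k,
      tupleBnd n (f (n + 1) c) = f n (tupleBnd n c))
    {n : ℕ} (hn : n ≤ m) {c : (Fin (n + 1) → G) →₀ ℤ} (hc : c ∈ vrChains X Set.univ (n + 1) k) :
    tupleBnd (n + 1) (coneHomotopy f (n + 1) c) + coneHomotopy f n (tupleBnd n c) =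
      f (n + 1) c - c := by
  induction n with
  | zero =>
    refine eqOn_supported ((tupleBnd (0 + 1)).comp (coneHomotopy f (0 + 1)) +
      (coneHomotopy f 0).comp (tupleBnd 0)) (f (0 + 1) - LinearMap.id) (fun σ hσ => ?_) hc
    have hσ' := single_mem_supported_iff.2 hσ
    simp only [LinearMap.add_apply, LinearMap.sub_apply, LinearMap.comp_apply, LinearMap.id_apply]
    rw [coneHomotopy_succ_single, tupleBnd_cone_succ]
    simp only [map_sub, hf 0 hn _ hσ', h0]
    simp [coneHomotopy]
  | succ n ih =>
    refine eqOn_supported ((tupleBnd (n + 1 + 1)).comp (coneHomotopy f (n + 1 + 1)) +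
      (coneHomotopy f (n + 1)).comp (tupleBnd (n + 1))) (f (n + 1 + 1) - LinearMap.id)
      (fun σ hσ => ?_) hc
    have hσ' := single_mem_supported_iff.2 hσ
    simp only [LinearMap.add_apply, LinearMap.sub_apply, LinearMap.comp_apply, LinearMap.id_apply]
    have h1 := ih (by omega) (tupleBnd_mem hσ')
    rw [tupleBnd_tupleBnd, map_zero, add_zero] at h1
    rw [coneHomotopy_succ_single, tupleBnd_cone_succ]
    simp only [map_sub, hf _ hn _ hσ', h1]
    abel

theorem equivariantAt_coneHomotopy {X : Finset G} {k m : ℕ}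
    {f : ∀ n, ((Fin n → G) →₀ ℤ) →ₗ[ℤ] ((Fin n → G) →₀ ℤ)}
    (hf : ∀ n ≤ m, EquivariantAt X k (f n)) {n : ℕ} (hn : n ≤ m) :
    EquivariantAt X k (coneHomotopy f n) := by
  induction n with
  | zero => intro g c _; simp [coneHomotopy]
  | succ n ih =>
    intro g c hc
    refine eqOn_supported ((coneHomotopy f (n + 1)).comp (leftTr g (n + 1)))
      ((leftTr g (n + 1 + 1)).comp (coneHomotopy f (n + 1))) (fun σ hσ => ?_) hc
    have hσ' := single_mem_supported_iff.2 hσ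
    simp only [LinearMap.comp_apply]
    have h1 := ih (by omega) g _ (tupleBnd_mem hσ')
    rw [coneHomotopy_succ_single, ← cone_leftTr, map_sub (leftTr g (n + 1)),
      map_sub (leftTr g (n + 1)), ← h1, ← hf _ hn g _ hσ', ← tupleBnd_leftTr, leftTr_single,
      coneHomotopy_succ_single]

theorem coneHomotopy_mem {V : Type*} {S : Set V}
    {f : ∀ n, ((Fin n → V) →₀ ℤ) →ₗ[ℤ] ((Fin n → V) →₀ ℤ)}
    (hf : ∀ n, ∀ c ∈ Finsupp.supported ℤ ℤ {σ : Fin n → V | ∀ i, σ i ∈ S},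
      f n c ∈ Finsupp.supported ℤ ℤ {σ : Fin n → V | ∀ i, σ i ∈ S})
    (n : ℕ) {c : (Fin n → V) →₀ ℤ}
    (hc : c ∈ Finsupp.supported ℤ ℤ {σ : Fin n → V | ∀ i, σ i ∈ S}) :
    coneHomotopy f n c ∈ Finsupp.supported ℤ ℤ {σ : Fin (n + 1) → V | ∀ i, σ i ∈ S} := by
  induction n with
  | zero => simp [coneHomotopy]
  | succ n ih =>
    refine map_mem_supported _ (fun σ hσ => ?_) hc
    have hσ' := single_mem_supported_iff.2 hσ
    rw [coneHomotopy_succ_single]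
    refine map_mem_supported (cone (σ 0) (n + 1)) (fun τ hτ => ?_)
      (Submodule.sub_mem _ (Submodule.sub_mem _ (hf _ _ hσ') hσ') (ih ?_))
    · rw [cone_single]
      refine single_mem_supported_iff.2 fun i => ?_
      refine Fin.cases ?_ (fun j => ?_) i
      · simpa using hσ 0
      · simpa using hτ j
    · rw [tupleBnd_single]
      exact Submodule.sum_mem _ fun i _ => Submodule.smul_mem _ _
        (single_mem_supported_iff.2 fun j => hσ _)

/-! ### Contracting all simplices to the scales of a connecting vector -/

open Classical in
/-- A filling of `z` by a chain at scale `k` (zero if there is none). -/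
noncomputable def filling (X : Finset G) (k n : ℕ) (z : (Fin n → G) →₀ ℤ) :
    (Fin (n + 1) → G) →₀ ℤ :=
  if h : ∃ c ∈ vrChains X Set.univ (n + 1) k, tupleBnd n c = z then h.choose else 0

theorem filling_mem (X : Finset G) (k n : ℕ) (z : (Fin n → G) →₀ ℤ) :
    filling X k n z ∈ vrChains X Set.univ (n + 1) k := by
  unfold filling
  split_ifs with h
  · exact h.choose_spec.1
  · exact Submodule.zero_mem _

theorem tupleBnd_filling {X : Finset G} {k n : ℕ} {z : (Fin n → G) →₀ ℤ}
    (h : ∃ c ∈ vrChains X Set.univ (n + 1) k, tupleBnd n c = z) :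
    tupleBnd n (filling X k n z) = z := by
  unfold filling
  rw [dif_pos h]
  exact h.choose_spec.2

/-- The equivariant chain map replacing a simplex by a chain at the scales `kv`. -/
noncomputable def contraction (X : Finset G) (kv : ℕ → ℕ) :
    ∀ n, ((Fin n → G) →₀ ℤ) →ₗ[ℤ] ((Fin n → G) →₀ ℤ)
  | 0 => LinearMap.id
  | n + 1 => Finsupp.lift _ ℤ _ fun σ => leftTr (σ 0) (n + 1)
      (filling X (kv n) n (contraction X kv n
        (tupleBnd n (single (fun i => (σ 0)⁻¹ * σ i) 1))))

theorem contraction_succ_single (X : Finset G) (kv : ℕ → ℕ) (n : ℕ) (σ : Fin (n + 1) → G) :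
    contraction X kv (n + 1) (single σ 1) = leftTr (σ 0) (n + 1)
      (filling X (kv n) n (contraction X kv n
        (tupleBnd n (single (fun i => (σ 0)⁻¹ * σ i) 1)))) := by
  simp [contraction]

theorem leftTr_leftTr (g h : G) (n : ℕ) (c : (Fin n → G) →₀ ℤ) :
    leftTr g n (leftTr h n c) = leftTr (g * h) n c := by
  suffices H : (leftTr g n).comp (leftTr h n) = leftTr (g * h) n from LinearMap.congr_fun H c
  ext1 σ
  ext1
  simp only [LinearMap.comp_apply, Finsupp.lsingle_apply, leftTr_single, mul_assoc]

theorem contraction_leftTr (X : Finset G) (kv : ℕ → ℕ) (g : G) (n : ℕ) (c : (Fin n → G) →₀ ℤ) :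
    contraction X kv n (leftTr g n c) = leftTr g n (contraction X kv n c) := by
  suffices H : (contraction X kv n).comp (leftTr g n) = (leftTr g n).comp (contraction X kv n) from
    LinearMap.congr_fun H c
  ext1 σ
  ext1
  cases n with
  | zero => rfl
  | succ n =>
    simp only [LinearMap.comp_apply, Finsupp.lsingle_apply, leftTr_single,
      contraction_succ_single, leftTr_leftTr, mul_inv_rev, mul_assoc, inv_mul_cancel_left]

theorem contraction_mem (X : Finset G) (kv : ℕ → ℕ) (n : ℕ) (c : (Fin (n + 1) → G) →₀ ℤ) :
    contraction X kv (n + 1) c ∈ vrChains X Set.univ (n + 1) (kv n) := by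
  refine map_mem_supported (A := Set.univ) _ (fun σ _ => ?_) (by simp)
  rw [contraction_succ_single]
  exact leftTr_mem _ (filling_mem _ _ _ _)

theorem wordDist_self (X : Finset G) (g : G) : wordDist X g g = 0 := by
  rw [wordDist, inv_mul_cancel]
  exact Nat.eq_zero_of_le_zero (Nat.sInf_le ⟨[], rfl, by simp, rfl⟩)

theorem tupleBnd_contraction_of_fillable {X : Finset G} {kv : ℕ → ℕ} {n : ℕ}
    (h : ∀ c : (Fin (n + 1) → G) →₀ ℤ, ∃ b ∈ vrChains X Set.univ (n + 1) (kv n),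
      tupleBnd n b = contraction X kv n (tupleBnd n c))
    (c : (Fin (n + 1) → G) →₀ ℤ) :
    tupleBnd n (contraction X kv (n + 1) c) = contraction X kv n (tupleBnd n c) := by
  suffices H : (tupleBnd n).comp (contraction X kv (n + 1)) =
      (contraction X kv n).comp (tupleBnd n) from LinearMap.congr_fun H c
  ext1 σ
  ext1
  simp only [LinearMap.comp_apply, Finsupp.lsingle_apply]
  rw [contraction_succ_single, tupleBnd_leftTr, tupleBnd_filling (h _), ← contraction_leftTr,
    ← tupleBnd_leftTr, ← leftTr_normalize]

theorem tupleBnd_contraction {X : Finset G} {kv : ℕ → ℕ} {m : ℕ}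
    (hconn : ∀ q < m, BoundsAt X Set.univ q (kv q) (kv (q + 1)))
    {n : ℕ} (hn : n ≤ m) (c : (Fin (n + 1) → G) →₀ ℤ) :
    tupleBnd n (contraction X kv (n + 1) c) = contraction X kv n (tupleBnd n c) := by
  induction n with
  | zero =>
    refine tupleBnd_contraction_of_fillable (fun c => ⟨cone 1 0 (contraction X kv 0
      (tupleBnd 0 c)), ?_, tupleBnd_cone_zero _ _⟩) c
    refine map_mem_supported (A := Set.univ) _ (fun τ _ => ?_) (by simp)
    rw [cone_single]
    refine single_mem_supported_iff.2 ⟨fun _ => Set.mem_univ _, fun i j => ?_⟩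
    rw [Fin.eq_zero i, Fin.eq_zero j, wordDist_self]
    exact Nat.zero_le _
  | succ n ih =>
    refine tupleBnd_contraction_of_fillable (fun c =>
      boundsAt_iff.1 (hconn n (by omega)) _ (contraction_mem X kv n _) ?_) c
    rw [ih (by omega), tupleBnd_tupleBnd, map_zero]

/-! ### Endomorphisms raising the valuation -/

theorem zero_lt_vchain_sub_iff {V : Type*} (χ : V → ℝ) {p q : ℕ} (c : (Fin (p + 1) → V) →₀ ℤ)
    (x : Fin (q + 1) → V) :
    0 < vchain χ c - vchain χ (single x 1) ↔
      ∀ τ ∈ c.support, ∀ i, ∃ j, χ (x j) < χ (τ i) := by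
  have h1 : vchain χ (single x 1) = vsimp χ x := by
    simp [vchain]
  obtain ⟨j₀, hj₀⟩ := exists_eq_ciInf_of_finite (f := fun j => (χ (x j) : EReal))
  have h2 : vsimp χ x = (χ (x j₀) : EReal) := hj₀.symm
  have h3 : ∀ j, χ (x j₀) ≤ χ (x j) := fun j => by
    have : (χ (x j₀) : EReal) ≤ χ (x j) := h2 ▸ iInf_le _ j
    exact_mod_cast this
  rw [h1, h2, EReal.sub_pos]
  constructor
  · intro h τ hτ i
    refine ⟨j₀, ?_⟩
    have h4 : vchain χ c ≤ (χ (τ i) : EReal) := (iInf₂_le τ hτ).trans (iInf_le _ i)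
    exact_mod_cast h.trans_le h4
  · intro h
    rw [vchain, ← Finset.inf_eq_iInf, Finset.lt_inf_iff (EReal.coe_lt_top _)]
    intro τ hτ
    rw [vsimp, ← Finset.inf_univ_eq_iInf, Finset.lt_inf_iff (EReal.coe_lt_top _)]
    intro i _
    obtain ⟨j, hj⟩ := h τ hτ i
    exact_mod_cast (h3 j).trans_lt hj

theorem uCond_iff {X : Finset G} {k m : ℕ}
    {φ : ∀ q : ℕ, ((Fin (q + 1) → G) →₀ ℤ) →ₗ[ℤ] ((Fin (q + 1) → G) →₀ ℤ)} {χ : G → ℝ} :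
    UCond X k m φ χ ↔ ∀ q ∈ Finset.range (m + 1),
      ∀ x ∈ {σ : Fin (q + 1) → G | σ 0 = 1 ∧ σ ∈ vrTuples X Set.univ (q + 1) k},
      ∀ τ ∈ (φ q (single x 1)).support, ∀ i, ∃ j, χ (x j) < χ (τ i) := by
  simp only [UCond, zero_lt_vchain_sub_iff, vrChain_iff, vrChains, single_mem_supported_iff,
    Finset.mem_range, Nat.lt_succ_iff, Set.mem_ofPred_eq, and_imp]

theorem isOpen_uCond {X : Finset G} (hX : Subgroup.closure (X : Set G) = ⊤) (k m : ℕ)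
    (φ : ∀ q : ℕ, ((Fin (q + 1) → G) →₀ ℤ) →ₗ[ℤ] ((Fin (q + 1) → G) →₀ ℤ)) :
    IsOpen {χ : {f : G → ℝ // IsCharacter f} | UCond X k m φ χ.1} := by
  simp only [uCond_iff, Set.ofPred_forall, Set.ofPred_exists]
  refine isOpen_biInter_finset fun q _ => (finite_normalized hX q k).isOpen_biInter fun x _ =>
    isOpen_biInter_finset fun τ _ => isOpen_iInter_of_finite fun i => isOpen_iUnion fun j => ?_
  exact isOpen_lt ((continuous_apply _).comp continuous_subtype_val)
    ((continuous_apply _).comp continuous_subtype_val)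

theorem exists_raise {X : Finset G} (hX : Subgroup.closure (X : Set G) = ⊤)
    {χ : G → ℝ} (hχ : IsCharacter χ) {n p k : ℕ}
    {L : ((Fin (n + 1) → G) →₀ ℤ) →ₗ[ℤ] ((Fin p → G) →₀ ℤ)} (hL : EquivariantAt X k L)
    (hmem : ∀ c ∈ vrChains X Set.univ (n + 1) k, L c ∈ vrChains X Set.univ p k)
    (hpos : ∀ x ∈ {σ : Fin (n + 1) → G | σ 0 = 1 ∧ σ ∈ vrTuples X Set.univ (n + 1) k},
      ∀ τ ∈ (L (single x 1)).support, ∀ i, ∃ j, χ (x j) < χ (τ i)) :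
    ∃ δ > 0, ∀ r : ℝ, ∀ c ∈ vrChains X {g | r ≤ χ g} (n + 1) k,
      L c ∈ vrChains X {g | r + δ ≤ χ g} p k := by
  have hδ : ∀ᶠ δ : ℝ in nhdsWithin 0 (Set.Ioi 0),
      ∀ x ∈ {σ : Fin (n + 1) → G | σ 0 = 1 ∧ σ ∈ vrTuples X Set.univ (n + 1) k},
      ∀ τ ∈ (L (single x 1)).support, ∀ i, ∃ j, χ (x j) + δ ≤ χ (τ i) := by
    rw [Filter.eventually_all_finite (finite_normalized hX n k)]
    intro x hx
    rw [Filter.eventually_all_finset]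
    intro τ hτ
    simp only [Filter.eventually_all]
    intro i
    obtain ⟨j, hj⟩ := hpos x hx τ hτ i
    filter_upwards [nhdsWithin_le_nhds (eventually_le_nhds (sub_pos.2 hj))] with δ hδ
    exact ⟨j, by linarith⟩
  obtain ⟨δ, hδ, hδ0⟩ := (hδ.and self_mem_nhdsWithin).exists
  refine ⟨δ, hδ0, fun r c hc => map_mem_supported L (fun σ hσ => ?_) hc⟩
  have hσ' := normalize_mem hσ
  rw [leftTr_normalize, hL _ _ (single_mem_supported_iff.2 hσ')]
  have hLσ := hmem _ (single_mem_supported_iff.2 hσ')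
  refine map_mem_supported (leftTr (σ 0) p) (fun τ hτ => ?_)
    (Finsupp.mem_supported_support (R := ℤ) (L _))
  rw [leftTr_single]
  refine single_mem_supported_iff.2 ⟨fun i => ?_, fun i j => ?_⟩
  · obtain ⟨j, hj⟩ := hδ _ ⟨inv_mul_cancel _, hσ'⟩ τ hτ i
    have h2 : r ≤ χ (σ j) := hσ.1 j
    have h3 := hχ (σ 0) (τ i)
    have h4 := hχ (σ 0) ((σ 0)⁻¹ * σ j)
    rw [mul_inv_cancel_left] at h4
    simp only [Set.mem_ofPred_eq]
    linarith
  · have h1 := (hLσ hτ).2 i j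
    simpa [wordDist, mul_assoc] using h1

/-- The extension of a family of endomorphisms by the identity in augmentation degree. -/
noncomputable def augmented {V : Type*}
    (φ : ∀ q : ℕ, ((Fin (q + 1) → V) →₀ ℤ) →ₗ[ℤ] ((Fin (q + 1) → V) →₀ ℤ)) :
    ∀ n, ((Fin n → V) →₀ ℤ) →ₗ[ℤ] ((Fin n → V) →₀ ℤ)
  | 0 => LinearMap.id
  | q + 1 => φ q

theorem equivariantAt_augmented {X : Finset G} {k m : ℕ}
    {φ : ∀ q : ℕ, ((Fin (q + 1) → G) →₀ ℤ) →ₗ[ℤ] ((Fin (q + 1) → G) →₀ ℤ)}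
    (hφ : IsChainEndo X k m φ) : ∀ n ≤ m + 1, EquivariantAt X k (augmented φ n)
  | 0, _ => fun _ _ _ => rfl
  | q + 1, hq => fun g c hc => hφ.2.1 q (by omega) g c hc

theorem tupleBnd_augmented {X : Finset G} {k m : ℕ}
    {φ : ∀ q : ℕ, ((Fin (q + 1) → G) →₀ ℤ) →ₗ[ℤ] ((Fin (q + 1) → G) →₀ ℤ)}
    (hφ : IsChainEndo X k m φ) : ∀ n ≤ m, ∀ c ∈ vrChains X Set.univ (n + 1) k,
      tupleBnd n (augmented φ (n + 1) c) = augmented φ n (tupleBnd n c)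
  | 0, _, c, hc => by
    simp only [augmented, tupleBnd_zero_eq, LinearMap.id_apply, hφ.2.2.1 c hc]
  | q + 1, hq, c, hc => by
    have := hφ.2.2.2 q hq c hc
    rwa [bnd_eq_tupleBnd] at this

theorem IsCharacter.map_pow {χ : G → ℝ} (hχ : IsCharacter χ) (t : G) (n : ℕ) :
    χ (t ^ n) = n * χ t := by
  induction n with
  | zero =>
    have := hχ 1 1
    rw [mul_one] at this
    rw [pow_zero, Nat.cast_zero, zero_mul]
    linarith
  | succ n ih =>
    rw [pow_succ, hχ, ih]
    push_cast
    ring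

theorem exists_le_of_uCond {X : Finset G} {k m : ℕ}
    {φ : ∀ q : ℕ, ((Fin (q + 1) → G) →₀ ℤ) →ₗ[ℤ] ((Fin (q + 1) → G) →₀ ℤ)}
    (hφ : IsChainEndo X k m φ) {χ : G → ℝ} (hχ : IsCharacter χ) (hU : UCond X k m φ χ) (A : ℝ) :
    ∃ t, A ≤ χ t := by
  have hone : (fun _ => 1 : Fin 1 → G) ∈ vrTuples X Set.univ 1 k :=
    ⟨fun _ => Set.mem_univ _, fun i j => by rw [wordDist_self]; exact Nat.zero_le _⟩
  have hne : φ 0 (single (fun _ => 1) 1) ≠ 0 := by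
    intro h
    have := hφ.2.2.1 _ (single_mem_supported_iff.2 hone)
    rw [h, map_zero] at this
    simp [aug] at this
  obtain ⟨τ, hτ⟩ := Finsupp.support_nonempty_iff.2 hne
  obtain ⟨j, hj⟩ := uCond_iff.1 hU 0 (by simp) _ ⟨rfl, hone⟩ τ hτ 0
  have h0 := hχ.map_pow 1 0
  rw [pow_zero, Nat.cast_zero, zero_mul] at h0
  rw [h0] at hj
  obtain ⟨n, hn⟩ := Archimedean.arch A hj
  exact ⟨τ 0 ^ n, by rwa [hχ.map_pow, ← nsmul_eq_mul]⟩

theorem rightTr_mem {S T : Set G} {t : G} (h : ∀ g ∈ S, g * t ∈ T) (n : ℕ)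
    {c : (Fin n → G) →₀ ℤ} (hc : c ∈ Finsupp.supported ℤ ℤ {σ : Fin n → G | ∀ i, σ i ∈ S}) :
    rightTr t n c ∈ Finsupp.supported ℤ ℤ {σ : Fin n → G | ∀ i, σ i ∈ T} := by
  refine map_mem_supported _ (fun σ hσ => ?_) hc
  rw [rightTr_single]
  exact single_mem_supported_iff.2 fun i => h _ (hσ i)

theorem mem_vrChains_of_mem {X : Finset G} {S T : Set G} {n k l : ℕ} {c : (Fin n → G) →₀ ℤ}
    (h1 : c ∈ vrChains X S n k) (h2 : c ∈ vrChains X T n l) : c ∈ vrChains X S n l :=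
  fun _ hσ => ⟨(h1 hσ).1, (h2 hσ).2⟩

theorem supported_of_mem_vrChains {X : Finset G} {S : Set G} {n k : ℕ} {c : (Fin n → G) →₀ ℤ}
    (h : c ∈ vrChains X S n k) : c ∈ Finsupp.supported ℤ ℤ {σ : Fin n → G | ∀ i, σ i ∈ S} :=
  fun _ hσ => (h hσ).1

theorem mem_vrChains_of_supported {X : Finset G} {S T : Set G} {n k : ℕ}
    {c : (Fin n → G) →₀ ℤ} (h1 : c ∈ Finsupp.supported ℤ ℤ {σ : Fin n → G | ∀ i, σ i ∈ S})
    (h2 : c ∈ vrChains X T n k) : c ∈ vrChains X S n k :=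
  fun _ hσ => ⟨h1 hσ, (h2 hσ).2⟩

/-- Cycles at scale `k` in the half space `0 ≤ χ` bound at a uniform scale, after a uniform
loss of valuation. -/
theorem exists_filling_with_loss {X : Finset G} (hX : Subgroup.closure (X : Set G) = ⊤) {m K : ℕ}
    {kv : ℕ → ℕ} (hconn : ∀ q < m, BoundsAt X Set.univ q (kv q) (kv (q + 1)))
    (hK : ∀ q ≤ m, kv q ≤ K)
    {φ : ∀ q : ℕ, ((Fin (q + 1) → G) →₀ ℤ) →ₗ[ℤ] ((Fin (q + 1) → G) →₀ ℤ)}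
    (hφ : IsChainEndo X K m φ) {χ : G → ℝ} (hχ : IsCharacter χ) (hU : UCond X K m φ χ)
    {q : ℕ} (hq : q < m) (k : ℕ) :
    ∃ (l : ℕ) (A : ℝ), ∀ z ∈ vrChains X {g | 0 ≤ χ g} (q + 1) k, tupleBnd q z = 0 →
      ∃ c ∈ vrChains X {g | -A ≤ χ g} (q + 2) l, tupleBnd (q + 1) c = z := by
  set f := augmented φ with hf
  set ψ := contraction X kv with hψ
  have feq := equivariantAt_augmented hφ
  have fbd := tupleBnd_augmented hφ
  have hψeq : ∀ n ≤ m + 1, EquivariantAt X k (ψ n) :=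
    fun n _ g c _ => contraction_leftTr X kv g n c
  have hψbd : ∀ n ≤ m, ∀ c : (Fin (n + 1) → G) →₀ ℤ,
      tupleBnd n (ψ (n + 1) c) = ψ n (tupleBnd n c) :=
    fun n hn c => tupleBnd_contraction hconn hn c
  obtain ⟨l₁, B₁, h₁⟩ := exists_bound_of_equivariantAt hX hχ (hψeq (q + 1) (by omega))
  obtain ⟨l₂, B₂, h₂⟩ := exists_bound_of_equivariantAt hX hχ
    (equivariantAt_coneHomotopy hψeq (n := q + 1) (by omega))
  obtain ⟨l₃, B₃, h₃⟩ := exists_bound_of_equivariantAt hX hχ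
    (equivariantAt_coneHomotopy feq (n := q + 1) (by omega))
  obtain ⟨δ, hδ, hraise⟩ := exists_raise hX hχ (feq (q + 2) (by omega))
    (fun c hc => hφ.1 (q + 1) (by omega) c hc) (uCond_iff.1 hU (q + 1) (by simp; omega))
  obtain ⟨δ', hδ', hraise'⟩ := exists_raise hX hχ (feq (q + 1) (by omega))
    (fun c hc => hφ.1 q (by omega) c hc) (uCond_iff.1 hU q (by simp; omega))
  refine ⟨max K (max l₂ l₃), max 0 (max B₂ (B₁ + B₃)), fun z hz hzc => ?_⟩
  set A := max 0 (max B₂ (B₁ + B₃)) with hA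
  have hA0 : 0 ≤ A := le_max_left _ _
  have hA2 : B₂ ≤ A := (le_max_left _ _).trans (le_max_right _ _)
  have hA3 : B₁ + B₃ ≤ A := (le_max_right _ _).trans (le_max_right _ _)
  set w := ψ (q + 1) z with hw
  have hwq : w ∈ vrChains X Set.univ (q + 1) (kv q) := contraction_mem X kv q z
  have hwB : w ∈ vrChains X {g | -B₁ ≤ χ g} (q + 1) K := by
    have := mem_vrChains_of_mem (h₁ 0 z hz) hwq
    rw [zero_sub] at this
    exact vrChains_mono subset_rfl (hK q hq.le) this
  have hwc : tupleBnd q w = 0 := by rw [hw, hψbd q hq.le, hzc, map_zero]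
  obtain ⟨c₀, hc₀, hc₀w⟩ := boundsAt_iff.1 (hconn q hq) w hwq hwc
  replace hc₀ := vrChains_mono subset_rfl (hK (q + 1) hq) hc₀
  obtain ⟨r, hr⟩ := exists_le_of_mem_vrChains χ hc₀
  have hwi : ∀ i : ℕ, (f (q + 1) ^ i) w ∈ vrChains X {g | -B₁ ≤ χ g} (q + 1) K ∧
      tupleBnd q ((f (q + 1) ^ i) w) = 0 := by
    intro i
    induction i with
    | zero => exact ⟨hwB, hwc⟩
    | succ i ih =>
      rw [pow_succ', Module.End.mul_apply]
      refine ⟨vrChains_mono (fun g hg => ?_) le_rfl (hraise' _ _ ih.1), ?_⟩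
      · simp only [Set.mem_ofPred_eq] at hg ⊢
        linarith
      · rw [fbd q hq.le _ (vrChains_mono (Set.subset_univ _) le_rfl ih.1), ih.2, map_zero]
  have hci : ∀ i : ℕ, (f (q + 2) ^ i) c₀ ∈ vrChains X {g | r + i * δ ≤ χ g} (q + 2) K ∧
      tupleBnd (q + 1) ((f (q + 2) ^ i) c₀) = (f (q + 1) ^ i) w := by
    intro i
    induction i with
    | zero => simpa using ⟨hr, hc₀w⟩
    | succ i ih =>
      rw [pow_succ', pow_succ', Module.End.mul_apply, Module.End.mul_apply]
      refine ⟨vrChains_mono (fun g hg => ?_) le_rfl (hraise _ _ ih.1), ?_⟩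
      · simp only [Set.mem_ofPred_eq] at hg ⊢
        push_cast
        linarith
      · rw [fbd (q + 1) hq _ (vrChains_mono (Set.subset_univ _) le_rfl ih.1), ih.2]
  have hhom : ∀ N : ℕ, ∃ b ∈ vrChains X {g | -A ≤ χ g} (q + 2) l₃,
      tupleBnd (q + 1) b = (f (q + 1) ^ N) w - w := by
    intro N
    induction N with
    | zero => exact ⟨0, Submodule.zero_mem _, by simp⟩
    | succ N ih =>
      obtain ⟨b, hb, hbw⟩ := ih
      obtain ⟨hN, hNc⟩ := hwi N
      refine ⟨b + coneHomotopy f (q + 1) ((f (q + 1) ^ N) w), Submodule.add_mem _ hb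
        (vrChains_mono (fun g hg => ?_) le_rfl (h₃ _ _ hN)), ?_⟩
      · simp only [Set.mem_ofPred_eq] at hg ⊢
        linarith
      · have := tupleBnd_coneHomotopy rfl fbd hq.le
          (vrChains_mono (Set.subset_univ _) le_rfl hN)
        rw [hNc, map_zero, add_zero] at this
        rw [map_add, hbw, this, pow_succ', Module.End.mul_apply]
        abel
  obtain ⟨N, hN⟩ := Archimedean.arch (-r) hδ
  rw [nsmul_eq_mul] at hN
  obtain ⟨b, hb, hbw⟩ := hhom N
  obtain ⟨hcN, hcNw⟩ := hci N
  refine ⟨(f (q + 2) ^ N) c₀ - b - coneHomotopy ψ (q + 1) z,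
    Submodule.sub_mem _ (Submodule.sub_mem _ (vrChains_mono (fun g hg => ?_) (le_max_left _ _) hcN)
      (vrChains_mono subset_rfl ((le_max_right _ _).trans (le_max_right _ _)) hb))
      (vrChains_mono (fun g hg => ?_) ((le_max_left _ _).trans (le_max_right _ _)) (h₂ 0 z hz)), ?_⟩
  · simp only [Set.mem_ofPred_eq] at hg ⊢
    linarith
  · simp only [Set.mem_ofPred_eq] at hg ⊢
    linarith
  · have := tupleBnd_coneHomotopy (k := k) rfl (fun n hn c _ => hψbd n hn c) hq.le
      (vrChains_mono (Set.subset_univ _) le_rfl hz)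
    rw [hzc, map_zero, add_zero] at this
    rw [map_sub, map_sub, hcNw, hbw, this]
    abel

theorem typeFP_of_uCond {X : Finset G} (hX : Subgroup.closure (X : Set G) = ⊤) {m K : ℕ}
    {kv : ℕ → ℕ} (hconn : ∀ q < m, BoundsAt X Set.univ q (kv q) (kv (q + 1)))
    (hK : ∀ q ≤ m, kv q ≤ K)
    {φ : ∀ q : ℕ, ((Fin (q + 1) → G) →₀ ℤ) →ₗ[ℤ] ((Fin (q + 1) → G) →₀ ℤ)}
    (hφ : IsChainEndo X K m φ) {χ : G → ℝ} (hχ : IsCharacter χ) (hU : UCond X K m φ χ) :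
    TypeFP X {g : G | 0 ≤ χ g} m := by
  intro q hq k
  obtain ⟨l, A, hfill⟩ := exists_filling_with_loss hX hconn hK hφ hχ hU hq k
  obtain ⟨t, ht⟩ := exists_le_of_uCond hφ hχ hU (max A 0)
  have htA : A ≤ χ t := (le_max_left _ _).trans ht
  have ht0 : 0 ≤ χ t := (le_max_right _ _).trans ht
  have req : ∀ k n, EquivariantAt X k (rightTr t n) :=
    fun _ n g c _ => leftTr_rightTr g t n c
  obtain ⟨l₁, B₁, h₁⟩ := exists_bound_of_equivariantAt hX hχ (req l (q + 2))
  obtain ⟨l₂, B₂, h₂⟩ := exists_bound_of_equivariantAt hX hχ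
    (equivariantAt_coneHomotopy (fun n (_ : n ≤ q + 1) => req k n) le_rfl)
  refine ⟨max k (max l₁ l₂), le_max_left _ _, boundsAt_iff.2 fun z hz hzc => ?_⟩
  obtain ⟨c, hc, hcz⟩ := hfill z hz hzc
  have hhom := tupleBnd_coneHomotopy (X := X) (k := k) (f := rightTr t)
    (by ext1 σ; ext1; rw [LinearMap.comp_apply, Finsupp.lsingle_apply, rightTr_single]
        simp only [LinearMap.comp_apply, LinearMap.id_apply, Finsupp.lsingle_apply]
        congr 1; exact Subsingleton.elim _ _)
    (fun n _ c _ => tupleBnd_rightTr t n c) le_rfl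
    (vrChains_mono (Set.subset_univ _) le_rfl hz)
  rw [hzc, map_zero, add_zero] at hhom
  refine ⟨rightTr t (q + 2) c - coneHomotopy (rightTr t) (q + 1) z, Submodule.sub_mem _
    (vrChains_mono subset_rfl ((le_max_left _ _).trans (le_max_right _ _)) ?_)
    (vrChains_mono subset_rfl ((le_max_right _ _).trans (le_max_right _ _)) ?_), ?_⟩
  · refine mem_vrChains_of_supported (rightTr_mem (fun g hg => ?_) _
      (supported_of_mem_vrChains hc)) (h₁ _ c hc)
    simp only [Set.mem_ofPred_eq] at hg ⊢
    rw [hχ]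
    linarith
  · refine mem_vrChains_of_supported (coneHomotopy_mem (fun n c hc => rightTr_mem
      (fun g hg => ?_) n hc) _ (supported_of_mem_vrChains hz)) (h₂ _ z hz)
    simp only [Set.mem_ofPred_eq] at hg ⊢
    rw [hχ]
    linarith
  · rw [map_sub, tupleBnd_rightTr, hcz, hhom]
    abel

/-- For `G` with homological connecting vector of maximum `k` and a chain endomorphism `φ`
of `ℤG`-complexes on `(C_q^k(G))_{q≤m}` extending the identity on `ℤ`, the set `U(φ)` is an
open set of characters and `U(φ) ⊆ Σ^m(G;ℤ)`. -/
theorem stmt13 {G : Type*} [Group G] (X : Finset G)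
    (hX : Subgroup.closure (X : Set G) = ⊤) (m : ℕ) (kv : ℕ → ℕ)
    (hconn : ∀ q < m, BoundsAt X Set.univ q (kv q) (kv (q + 1)))
    (φ : ∀ q : ℕ, ((Fin (q + 1) → G) →₀ ℤ) →ₗ[ℤ] ((Fin (q + 1) → G) →₀ ℤ))
    (hφ : IsChainEndo X ((Finset.range (m + 1)).sup kv) m φ) :
    IsOpen {χ : {f : G → ℝ // IsCharacter f} |
      UCond X ((Finset.range (m + 1)).sup kv) m φ χ.1} ∧
    (∀ χ : G → ℝ, IsCharacter χ → UCond X ((Finset.range (m + 1)).sup kv) m φ χ →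
      TypeFP X {g : G | 0 ≤ χ g} m) := by
  exact ⟨isOpen_uCond hX _ m φ, fun χ hχ hU => typeFP_of_uCond hX hconn
    (fun q hq => Finset.le_sup (f := kv) (Finset.mem_range.2 (Nat.lt_succ_of_le hq))) hφ hχ hU⟩
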